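/- Let n ≥ 1 be a natural number, and for every ε ∈ [0,1] define a_ε(x) = λ_{2n−1} + ε·(a(x) − λ_{2n−1}), where a ∈ L_T satisfies λ_{2n−1} ≺ a and ∫_0^T |a(x) − λ_{2n−1}| dx ≤ (8πn(n+1)/T)·cot(nπ/(2(n+1))). Then for every ε ∈ (0,1], the periodic problem u'' + a_ε(x)u = 0 on (0,T), u(0) = u(T), u'(0) = u'(T), has only the trivial solution. -/

import Mathlib

open MeasureTheory Set Real

/-- `u` is a solution of `u'' + a·u = 0` on `[c,d]`, with derivative function `v`. -/
def IsSolOn (a u v : ℝ → ℝ) (c d : ℝ) : Prop :=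
  (∀ x ∈ Set.Icc c d, HasDerivWithinAt u (v x) (Set.Icc c d) x) ∧
  (∀ x ∈ Set.Icc c d, v x = v c - ∫ t in c..x, a t * u t)

/-- Membership in `L_T`: measurable, `T`-periodic and integrable on `[0,T]`. -/
def MemLT (T : ℝ) (a : ℝ → ℝ) : Prop :=
  Measurable a ∧ (∀ x, a (x + T) = a x) ∧ IntegrableOn a (Set.Icc 0 T)

/-- `c ≺ d` : `c ≤ d` a.e. on `[0,T]` and `c < d` on a set of positive measure. -/
def Prec (T : ℝ) (c d : ℝ → ℝ) : Prop :=
  (∀ᵐ x ∂(volume.restrict (Set.Icc 0 T)), c x ≤ d x) ∧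
  0 < volume {x ∈ Set.Icc 0 T | c x < d x}

/-- `(u,v)` solves the periodic problem `u'' + a u = 0`, `u(0)=u(T)`, `u'(0)=u'(T)`. -/
def PeriodicSol (T : ℝ) (a u v : ℝ → ℝ) : Prop :=
  IsSolOn a u v 0 T ∧ u 0 = u T ∧ v 0 = v T

/-- `(u,v)` solves the antiperiodic problem `u'' + a u = 0`, `u(0)+u(T)=0`, `u'(0)+u'(T)=0`. -/
def AntiperiodicSol (T : ℝ) (a u v : ℝ → ℝ) : Prop :=
  IsSolOn a u v 0 T ∧ u 0 + u T = 0 ∧ v 0 + v T = 0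

/-- The `(2n-1)`-st periodic eigenvalue `λ_{2n-1} = 4 n² π² / T²`. -/
noncomputable def lam (T : ℝ) (n : ℕ) : ℝ := 4 * (n : ℝ) ^ 2 * Real.pi ^ 2 / T ^ 2

/-- The `(2n-1)`-st antiperiodic eigenvalue `λ̃_{2n-1} = (2n-1)² π² / T²`. -/
noncomputable def lamT (T : ℝ) (n : ℕ) : ℝ := (2 * (n : ℝ) - 1) ^ 2 * Real.pi ^ 2 / T ^ 2

/-- The set `Λ_n`. -/
def LambdaN (T : ℝ) (n : ℕ) : Set (ℝ → ℝ) :=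
  {a | MemLT T a ∧ Prec T (fun _ => lam T n) a ∧
    ∃ u v : ℝ → ℝ, PeriodicSol T a u v ∧ ∃ x ∈ Set.Icc 0 T, u x ≠ 0}

/-- The set `Λ̃_n`. -/
def LambdaTildeN (T : ℝ) (n : ℕ) : Set (ℝ → ℝ) :=
  {a | MemLT T a ∧ Prec T (fun _ => lamT T n) a ∧
    ∃ u v : ℝ → ℝ, AntiperiodicSol T a u v ∧ ∃ x ∈ Set.Icc 0 T, u x ≠ 0}

/-- The constant `β_{1,n}` of the periodic `L¹` Lyapunov inequality. -/
noncomputable def beta1 (T : ℝ) (n : ℕ) : ℝ :=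
  8 * Real.pi * (n : ℝ) * ((n : ℝ) + 1) / T * Real.cot ((n : ℝ) * Real.pi / (2 * ((n : ℝ) + 1)))

/-- The constant `β̃_{1,n}` of the antiperiodic `L¹` Lyapunov inequality. -/
noncomputable def betaT1 (T : ℝ) (n : ℕ) : ℝ :=
  2 * Real.pi * (2 * (n : ℝ) - 1) * (2 * (n : ℝ) + 1) / T *
    Real.cot ((2 * (n : ℝ) - 1) * Real.pi / (2 * (2 * (n : ℝ) + 1)))

/-
In Prüfer coordinates `u' = r cos θ`, `ω u = r sin θ` the equation `u'' + (ω² + p) u = 0` becomes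
`θ' = ω + q sin² θ` with `q = p / ω`. If `p ≥ 0` is not almost everywhere zero, then `θ` increases
by more than `ω T` over a period; for a nontrivial periodic solution the increase is an integer
multiple of `2π`, so `2πn ≤ ω T` forces at least `n + 1` full turns. So many turns are expensive:
for a weight `g ≥ 0` of period `π` with `g sin² ≤ 1`, the inequality `q ≥ g(θ) θ' - ω g(θ)`
integrates over `m` half-turns to `∫ q ≥ m ∫₀^π g - ω ∫ g(θ)`. Choosing `g = 1 / sin²`, truncated
at the height `1 / sin² φ` with `φ = ω T / 2m`, gives `∫ q > 2m cot φ`, which for `m = 2 (n + 1)`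
contradicts the assumed bound.
-/

/-- `f` is absolutely continuous on the interval between `c` and `d`, with almost everywhere
derivative `f'`: the regularity of solutions of equations with integrable coefficients. As
derivatives are two-sided, the condition at `c` and `d` would constrain `f` outside the interval;
it is void because it is only imposed almost everywhere. -/
structure HasACDeriv (f f' : ℝ → ℝ) (c d : ℝ) : Prop where
  absolutelyContinuousOnInterval : AbsolutelyContinuousOnInterval f c d
  ae_hasDerivAt : ∀ᵐ x, x ∈ uIcc c d → HasDerivAt f (f' x) x

section AbsolutelyContinuous

variable {X Y : Type*} [PseudoMetricSpace X] [PseudoMetricSpace Y] {c d : ℝ}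

lemma absolutelyContinuousOnInterval_congr {f g : ℝ → X}
    (hf : AbsolutelyContinuousOnInterval f c d) (hfg : EqOn f g (uIcc c d)) :
    AbsolutelyContinuousOnInterval g c d := by
  rw [absolutelyContinuousOnInterval_iff] at hf ⊢
  refine fun ε hε => (hf ε hε).imp fun δ ⟨hδ, H⟩ => ⟨hδ, fun E hE hlen => ?_⟩
  refine (Finset.sum_congr rfl fun i hi => ?_).trans_lt (H E hE hlen)
  rw [hfg (hE.1 i hi).1, hfg (hE.1 i hi).2]

lemma absolutelyContinuousOnInterval_comp {f : ℝ → X} {F : X → Y} {K : NNReal} {s : Set X}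
    (hF : LipschitzOnWith K F s) (hf : AbsolutelyContinuousOnInterval f c d)
    (hfs : MapsTo f (uIcc c d) s) :
    AbsolutelyContinuousOnInterval (fun x => F (f x)) c d := by
  rw [absolutelyContinuousOnInterval_iff] at hf ⊢
  intro ε hε
  obtain ⟨δ, hδ, H⟩ := hf (ε / (K + 1)) (by positivity)
  refine ⟨δ, hδ, fun E hE hlen => ?_⟩
  have hsum := H E hE hlen
  rw [lt_div_iff₀' (by positivity), Finset.mul_sum] at hsum
  refine (Finset.sum_le_sum fun i hi => ?_).trans_lt hsum
  have hend := hE.1 i hi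
  calc dist (F (f (E.2 i).1)) (F (f (E.2 i).2))
      ≤ K * dist (f (E.2 i).1) (f (E.2 i).2) :=
        hF.dist_le_mul _ (hfs hend.1) _ (hfs hend.2)
    _ ≤ (K + 1) * dist (f (E.2 i).1) (f (E.2 i).2) := by gcongr; simp

end AbsolutelyContinuous

namespace HasACDeriv

variable {f f' g g' : ℝ → ℝ} {c d : ℝ}

lemma continuousOn (hf : HasACDeriv f f' c d) : ContinuousOn f (uIcc c d) :=
  hf.absolutelyContinuousOnInterval.continuousOn

lemma mono (hf : HasACDeriv f f' c d) {x y : ℝ} (hxy : uIcc x y ⊆ uIcc c d) :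
    HasACDeriv f f' x y :=
  ⟨hf.absolutelyContinuousOnInterval.mono hxy,
    hf.ae_hasDerivAt.mono fun _ hderiv hmem => hderiv (hxy hmem)⟩

lemma congr_deriv (hf : HasACDeriv f f' c d) (h : EqOn f' g' (uIcc c d)) :
    HasACDeriv f g' c d :=
  ⟨hf.absolutelyContinuousOnInterval,
    hf.ae_hasDerivAt.mono fun _ hderiv hmem => h hmem ▸ hderiv hmem⟩

lemma const_mul (r : ℝ) (hf : HasACDeriv f f' c d) :
    HasACDeriv (fun x => r * f x) (fun x => r * f' x) c d :=
  ⟨hf.absolutelyContinuousOnInterval.const_mul r,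
    hf.ae_hasDerivAt.mono fun _ hderiv hmem => (hderiv hmem).const_mul r⟩

lemma add (hf : HasACDeriv f f' c d) (hg : HasACDeriv g g' c d) :
    HasACDeriv (fun x => f x + g x) (fun x => f' x + g' x) c d := by
  refine ⟨hf.absolutelyContinuousOnInterval.fun_add hg.absolutelyContinuousOnInterval, ?_⟩
  filter_upwards [hf.ae_hasDerivAt, hg.ae_hasDerivAt] with x hfx hgx hx
  exact (hfx hx).add (hgx hx)

lemma mul (hf : HasACDeriv f f' c d) (hg : HasACDeriv g g' c d) :
    HasACDeriv (fun x => f x * g x) (fun x => f' x * g x + f x * g' x) c d := by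
  refine ⟨hf.absolutelyContinuousOnInterval.fun_mul hg.absolutelyContinuousOnInterval, ?_⟩
  filter_upwards [hf.ae_hasDerivAt, hg.ae_hasDerivAt] with x hfx hgx hx
  exact (hfx hx).mul (hgx hx)

lemma comp {F F' : ℝ → ℝ} (hF : ∀ t, HasDerivAt F (F' t) t) (hF' : Continuous F')
    (hf : HasACDeriv f f' c d) :
    HasACDeriv (fun x => F (f x)) (fun x => F' (f x) * f' x) c d := by
  constructor
  · obtain ⟨C, hC⟩ := hf.absolutelyContinuousOnInterval.exists_bound
    have hF₁ : ContDiff ℝ 1 F :=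
      contDiff_one_iff_deriv.2
        ⟨fun t => (hF t).differentiableAt, by rwa [funext fun t => (hF t).deriv]⟩
    obtain ⟨K, hK⟩ := hF₁.contDiffOn.exists_lipschitzOnWith (by decide)
      (convex_Icc (-C) C) isCompact_Icc
    exact absolutelyContinuousOnInterval_comp hK hf.absolutelyContinuousOnInterval
      fun x hx => abs_le.1 (hC x hx)
  · exact hf.ae_hasDerivAt.mono fun x hderiv hx => (hF (f x)).comp x (hderiv hx)

lemma intervalIntegrable (hf : HasACDeriv f f' c d) : IntervalIntegrable f' volume c d := by
  refine hf.absolutelyContinuousOnInterval.intervalIntegrable_deriv.congr_ae ?_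
  refine (ae_restrict_iff' measurableSet_uIoc).2 ?_
  exact hf.ae_hasDerivAt.mono fun x hderiv hx => (hderiv (uIoc_subset_uIcc hx)).deriv

lemma integral_eq_sub (hf : HasACDeriv f f' c d) : ∫ x in c..d, f' x = f d - f c := by
  rw [← hf.absolutelyContinuousOnInterval.integral_deriv_eq_sub]
  refine intervalIntegral.integral_congr_ae ?_
  exact hf.ae_hasDerivAt.mono fun x hderiv hx => (hderiv (uIoc_subset_uIcc hx)).deriv.symm

lemma eq_left_of_deriv_eq_zero (hf : HasACDeriv f f' c d) (h : ∀ x ∈ uIcc c d, f' x = 0)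
    {x : ℝ} (hx : x ∈ uIcc c d) : f x = f c := by
  have hzero : ∀ᵐ x, x ∈ uIcc c d → HasDerivAt f 0 x :=
    hf.ae_hasDerivAt.mono fun x hderiv hx => h x hx ▸ hderiv hx
  obtain ⟨C, hC⟩ := hf.absolutelyContinuousOnInterval.const_of_ae_hasDerivAt_zero hzero
  rw [hC x hx, hC c left_mem_uIcc]

lemma mul_sub_le_sub (hf : HasACDeriv f f' c d) (hcd : c ≤ d) {r : ℝ}
    (h : ∀ᵐ x ∂volume.restrict (Icc c d), r ≤ f' x) : r * (d - c) ≤ f d - f c :=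
  calc r * (d - c) = ∫ _ in c..d, r := by
        rw [intervalIntegral.integral_const, smul_eq_mul, mul_comm]
    _ ≤ ∫ x in c..d, f' x := intervalIntegral.integral_mono_ae_restrict hcd
        intervalIntegrable_const hf.intervalIntegrable h
    _ = f d - f c := hf.integral_eq_sub

lemma strictMonoOn (hf : HasACDeriv f f' c d) (hcd : c ≤ d) {r : ℝ} (hr : 0 < r)
    (h : ∀ᵐ x ∂volume.restrict (Icc c d), r ≤ f' x) : StrictMonoOn f (Icc c d) := by
  intro x hx y hy hxy
  have hsub : Icc x y ⊆ Icc c d := Icc_subset_Icc hx.1 hy.2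
  have hmvt := (hf.mono (by rwa [uIcc_of_le hxy.le, uIcc_of_le hcd])).mul_sub_le_sub hxy.le
    (ae_restrict_of_ae_restrict_of_subset hsub h)
  exact sub_pos.1 ((mul_pos hr (sub_pos.2 hxy)).trans_le hmvt)

lemma integral_comp_mul_deriv {F : ℝ → ℝ} (hF : Continuous F) (hf : HasACDeriv f f' c d) :
    ∫ x in c..d, F (f x) * f' x = ∫ t in f c..f d, F t := by
  have hprim : ∀ t, HasDerivAt (fun t => ∫ s in (0 : ℝ)..t, F s) (F t) t := fun t =>
    (hF.integral_hasStrictDerivAt 0 t).hasDerivAt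
  rw [(hf.comp hprim hF).integral_eq_sub, intervalIntegral.integral_interval_sub_left] <;>
    exact hF.intervalIntegrable _ _

end HasACDeriv

section Primitive

variable {f f' : ℝ → ℝ} {c d : ℝ}

lemma hasACDeriv_of_eqOn_add_integral (hf' : IntervalIntegrable f' volume c d)
    (h : ∀ x ∈ uIcc c d, f x = f c + ∫ t in c..x, f' t) : HasACDeriv f f' c d := by
  have hconst : AbsolutelyContinuousOnInterval (fun _ => f c) c d :=
    contDiffOn_const.absolutelyContinuousOnInterval
  have hprim := hf'.absolutelyContinuousOnInterval_intervalIntegral left_mem_uIcc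
  refine ⟨absolutelyContinuousOnInterval_congr (hconst.fun_add hprim)
    fun x hx => (h x hx).symm, ?_⟩
  filter_upwards [hf'.ae_hasDerivAt_integral, Measure.ae_ne volume c, Measure.ae_ne volume d]
    with x hderiv hxc hxd hx
  have hnhds : uIcc c d ∈ nhds x :=
    Icc_mem_nhds (by grind [uIcc]) (by grind [uIcc])
  refine ((hderiv hx c left_mem_uIcc).const_add (f c)).congr_of_eventuallyEq ?_
  filter_upwards [hnhds] with y hy using h y hy

lemma hasACDeriv_integral (hf' : IntervalIntegrable f' volume c d) (r : ℝ) :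
    HasACDeriv (fun x => r + ∫ t in c..x, f' t) f' c d :=
  hasACDeriv_of_eqOn_add_integral hf' fun x _ => by simp

end Primitive

namespace HasACDeriv

variable {f f' ρ : ℝ → ℝ} {c d : ℝ}

lemma eq_mul_exp_integral (hf : HasACDeriv f (fun x => ρ x * f x) c d)
    (hρ : IntervalIntegrable ρ volume c d) {x : ℝ} (hx : x ∈ uIcc c d) :
    f x = f c * exp (∫ t in c..x, ρ t) := by
  have hexp : HasACDeriv (fun x => exp (-(0 + ∫ t in c..x, ρ t)))
      (fun x => -exp (-(0 + ∫ t in c..x, ρ t)) * ρ x) c d :=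
    (hasACDeriv_integral hρ 0).comp (F := fun t => exp (-t)) (F' := fun t => -exp (-t))
      (fun t => by simpa using (hasDerivAt_neg t).exp) (by fun_prop)
  have hconst := (hf.mul hexp).eq_left_of_deriv_eq_zero (fun t _ => by ring) hx
  simp only [zero_add, intervalIntegral.integral_same, neg_zero, exp_zero, mul_one] at hconst
  rw [← hconst, mul_assoc, ← exp_add, neg_add_cancel, exp_zero, mul_one]

lemma eqOn_zero_of_abs_deriv_le (hf : HasACDeriv f f' c d)
    (hρ : IntervalIntegrable ρ volume c d) (hle : ∀ x ∈ uIcc c d, |f' x| ≤ ρ x * |f x|)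
    {x₀ : ℝ} (hx₀ : x₀ ∈ uIcc c d) (hfx₀ : f x₀ = 0) : EqOn f 0 (uIcc c d) := by
  -- Where `f` vanishes so does `f'`, so the junk value `f' x / 0 = 0` is harmless.
  have hlin : EqOn f' (fun x => f' x / f x * f x) (uIcc c d) := by
    intro x hx
    rcases eq_or_ne (f x) 0 with hfx | hfx
    · simpa [hfx] using hle x hx
    · exact (div_mul_cancel₀ (f' x) hfx).symm
  have hquot : IntervalIntegrable (fun x => f' x / f x) volume c d := by
    have hmeas := (hf.continuousOn.mono uIoc_subset_uIcc).aestronglyMeasurable (μ := volume)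
      measurableSet_uIoc
    refine hρ.abs.mono_fun' (hf.intervalIntegrable.def'.aestronglyMeasurable.aemeasurable.div
      hmeas.aemeasurable).aestronglyMeasurable ?_
    refine (ae_restrict_iff' measurableSet_uIoc).2 (.of_forall fun x hx => ?_)
    simp only [norm_div, norm_eq_abs]
    exact div_le_of_le_mul₀ (abs_nonneg _) (abs_nonneg _)
      ((hle x (uIoc_subset_uIcc hx)).trans (by gcongr; exact le_abs_self _))
  have hsol := fun x hx => (hf.congr_deriv hlin).eq_mul_exp_integral hquot (x := x) hx
  have hfc : f c = 0 := by simpa [hfx₀, exp_ne_zero] using hsol x₀ hx₀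
  intro x hx
  simp [hsol x hx, hfc]

end HasACDeriv

section Polar

variable {x x' y y' : ℝ → ℝ} {c d : ℝ}

/-- The angular velocity of the plane curve `(x, y)` around the origin. -/
noncomputable def angularVelocity (x x' y y' : ℝ → ℝ) (t : ℝ) : ℝ :=
  (x t * y' t - y t * x' t) / (x t ^ 2 + y t ^ 2)

/-- The logarithmic derivative of the distance of the plane curve `(x, y)` to the origin. -/
noncomputable def radialRate (x x' y y' : ℝ → ℝ) (t : ℝ) : ℝ :=
  (x t * x' t + y t * y' t) / (x t ^ 2 + y t ^ 2)

lemma intervalIntegrable_angularVelocity (hx : HasACDeriv x x' c d) (hy : HasACDeriv y y' c d)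
    (hne : ∀ t ∈ uIcc c d, x t ^ 2 + y t ^ 2 ≠ 0) :
    IntervalIntegrable (angularVelocity x x' y y') volume c d := by
  have hnum := (hy.intervalIntegrable.continuousOn_mul hx.continuousOn).sub
    (hx.intervalIntegrable.continuousOn_mul hy.continuousOn)
  exact hnum.mul_continuousOn
    (((hx.continuousOn.pow 2).add (hy.continuousOn.pow 2)).inv₀ hne)

lemma intervalIntegrable_radialRate (hx : HasACDeriv x x' c d) (hy : HasACDeriv y y' c d)
    (hne : ∀ t ∈ uIcc c d, x t ^ 2 + y t ^ 2 ≠ 0) :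
    IntervalIntegrable (radialRate x x' y y') volume c d := by
  have hnum := (hx.intervalIntegrable.continuousOn_mul hx.continuousOn).add
    (hy.intervalIntegrable.continuousOn_mul hy.continuousOn)
  exact hnum.mul_continuousOn
    (((hx.continuousOn.pow 2).add (hy.continuousOn.pow 2)).inv₀ hne)

lemma hasACDeriv_mul_cos_add_mul_sin {θ : ℝ → ℝ} (hx : HasACDeriv x x' c d)
    (hy : HasACDeriv y y' c d) (hne : ∀ t ∈ uIcc c d, x t ^ 2 + y t ^ 2 ≠ 0)
    (hθ : HasACDeriv θ (angularVelocity x x' y y') c d) :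
    HasACDeriv (fun t => x t * cos (θ t) + y t * sin (θ t))
      (fun t => radialRate x x' y y' t * (x t * cos (θ t) + y t * sin (θ t))) c d := by
  refine ((hx.mul (hθ.comp hasDerivAt_cos (by fun_prop))).add
    (hy.mul (hθ.comp hasDerivAt_sin continuous_cos))).congr_deriv fun t ht => ?_
  have := hne t ht
  simp only [angularVelocity, radialRate]
  field_simp
  ring

lemma mul_cos_add_mul_sin_eq_mul_exp_integral {θ : ℝ → ℝ} (hx : HasACDeriv x x' c d)
    (hy : HasACDeriv y y' c d) (hne : ∀ t ∈ uIcc c d, x t ^ 2 + y t ^ 2 ≠ 0)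
    (hθ : HasACDeriv θ (angularVelocity x x' y y') c d) {t : ℝ} (ht : t ∈ uIcc c d) :
    x t * cos (θ t) + y t * sin (θ t) =
      (x c * cos (θ c) + y c * sin (θ c)) * exp (∫ s in c..t, radialRate x x' y y' s) :=
  (hasACDeriv_mul_cos_add_mul_sin hx hy hne hθ).eq_mul_exp_integral
    (intervalIntegrable_radialRate hx hy hne) ht

lemma eq_sqrt_mul_cos_and_eq_sqrt_mul_sin {a b φ : ℝ} (hpar : 0 < a * cos φ + b * sin φ)
    (hperp : b * cos φ = a * sin φ) :
    a = √(a ^ 2 + b ^ 2) * cos φ ∧ b = √(a ^ 2 + b ^ 2) * sin φ := by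
  have hnorm : √(a ^ 2 + b ^ 2) = a * cos φ + b * sin φ := by
    rw [sqrt_eq_iff_eq_sq (by positivity) hpar.le]
    linear_combination (b * cos φ - a * sin φ) * hperp - (a ^ 2 + b ^ 2) * sin_sq_add_cos_sq φ
  rw [hnorm]
  constructor
  · linear_combination -sin φ * hperp - a * sin_sq_add_cos_sq φ
  · linear_combination cos φ * hperp - b * sin_sq_add_cos_sq φ

lemma exists_polar_angle (hx : HasACDeriv x x' c d) (hy : HasACDeriv y y' c d)
    (hne : ∀ t ∈ uIcc c d, x t ^ 2 + y t ^ 2 ≠ 0) :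
    ∃ θ : ℝ → ℝ, HasACDeriv θ (angularVelocity x x' y y') c d ∧
      ∀ t ∈ uIcc c d, x t = √(x t ^ 2 + y t ^ 2) * cos (θ t) ∧
        y t = √(x t ^ 2 + y t ^ 2) * sin (θ t) := by
  let z : ℂ := ⟨x c, y c⟩
  have hz : 0 < ‖z‖ := by
    refine norm_pos_iff.2 fun h => hne c left_mem_uIcc ?_
    have hxc : x c = 0 := congrArg Complex.re h
    have hyc : y c = 0 := congrArg Complex.im h
    simp [hxc, hyc]
  have hxc : x c = ‖z‖ * cos z.arg := (Complex.norm_mul_cos_arg z).symm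
  have hyc : y c = ‖z‖ * sin z.arg := (Complex.norm_mul_sin_arg z).symm
  have hangle : ∀ r, HasACDeriv (fun t => r + ∫ s in c..t, angularVelocity x x' y y' s)
      (angularVelocity x x' y y') c d :=
    hasACDeriv_integral (intervalIntegrable_angularVelocity hx hy hne)
  refine ⟨_, hangle z.arg, fun t ht => eq_sqrt_mul_cos_and_eq_sqrt_mul_sin ?_ ?_⟩
  · rw [mul_cos_add_mul_sin_eq_mul_exp_integral hx hy hne (hangle z.arg) ht]
    have hinit : ‖z‖ * cos z.arg * cos z.arg + ‖z‖ * sin z.arg * sin z.arg = ‖z‖ := by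
      linear_combination ‖z‖ * sin_sq_add_cos_sq z.arg
    rw [intervalIntegral.integral_same, add_zero, hxc, hyc, hinit]
    positivity
  -- The component orthogonal to the angle is the component along the angle shifted by `π / 2`.
  · have hperp :=
      mul_cos_add_mul_sin_eq_mul_exp_integral hx hy hne (hangle (z.arg + π / 2)) ht
    have hinit : ‖z‖ * cos z.arg * -sin z.arg + ‖z‖ * sin z.arg * cos z.arg = 0 := by ring
    rw [intervalIntegral.integral_same, add_zero, add_right_comm, cos_add_pi_div_two,
      sin_add_pi_div_two, cos_add_pi_div_two, sin_add_pi_div_two, hxc, hyc, hinit] at hperp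
    linear_combination hperp

end Polar

namespace IsSolOn

variable {b u v : ℝ → ℝ} {c d : ℝ}

lemma continuousOn (h : IsSolOn b u v c d) : ContinuousOn u (Icc c d) :=
  fun x hx => (h.1 x hx).continuousWithinAt

lemma hasACDeriv_snd (h : IsSolOn b u v c d) (hcd : c ≤ d)
    (hb : IntervalIntegrable b volume c d) : HasACDeriv v (fun x => -(b x * u x)) c d := by
  have hcont : ContinuousOn u (uIcc c d) := uIcc_of_le hcd ▸ h.continuousOn
  refine hasACDeriv_of_eqOn_add_integral (hb.mul_continuousOn hcont).neg fun x hx => ?_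
  rw [h.2 x (uIcc_of_le hcd ▸ hx), intervalIntegral.integral_neg, sub_eq_add_neg]

lemma hasACDeriv_fst (h : IsSolOn b u v c d) (hcd : c ≤ d)
    (hb : IntervalIntegrable b volume c d) : HasACDeriv u v c d := by
  have hv : ContinuousOn v (uIcc c d) := (h.hasACDeriv_snd hcd hb).continuousOn
  refine hasACDeriv_of_eqOn_add_integral hv.intervalIntegrable fun x hx => ?_
  rw [uIcc_of_le hcd] at hx hv
  have hsub : Icc c x ⊆ Icc c d := Icc_subset_Icc_right hx.2
  rw [intervalIntegral.integral_eq_sub_of_hasDerivAt_of_le hx.1 (h.continuousOn.mono hsub)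
    (fun t ht => (h.1 t (hsub (Ioo_subset_Icc_self ht))).hasDerivAt
      (Icc_mem_nhds ht.1 (ht.2.trans_le hx.2)))
    ((hv.mono hsub).intervalIntegrable_of_Icc hx.1), add_sub_cancel]

end IsSolOn

section Pruefer

variable {ω c d : ℝ} {p q u v θ : ℝ → ℝ}

/-- `θ` solves the Prüfer equation `θ' = ω + q sin² θ`, the equation of the polar angle of
`(u', ω u)` when `u'' + (ω² + ω q) u = 0`. -/
def IsPrueferAngle (ω : ℝ) (q θ : ℝ → ℝ) (c d : ℝ) : Prop :=
  HasACDeriv θ (fun x => ω + q x * sin (θ x) ^ 2) c d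

namespace IsSolOn

lemma energy_ne_zero (h : IsSolOn (fun x => ω ^ 2 + p x) u v c d) (hω : 0 < ω) (hcd : c ≤ d)
    (hp : IntervalIntegrable p volume c d) (hu : ¬ EqOn u 0 (Icc c d)) :
    ∀ x ∈ uIcc c d, v x ^ 2 + (ω * u x) ^ 2 ≠ 0 := by
  have hb : IntervalIntegrable (fun x => ω ^ 2 + p x) volume c d := intervalIntegrable_const.add hp
  have hv := h.hasACDeriv_snd hcd hb
  have hu' := (h.hasACDeriv_fst hcd hb).const_mul ω
  have hE : HasACDeriv (fun x => v x ^ 2 + (ω * u x) ^ 2) (fun x => -2 * p x * u x * v x) c d := by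
    simp only [pow_two]
    refine ((hv.mul hv).add (hu'.mul hu')).congr_deriv fun x _ => ?_
    ring
  have hle : ∀ x ∈ uIcc c d,
      |-2 * p x * u x * v x| ≤ |p x| / ω * |v x ^ 2 + (ω * u x) ^ 2| := by
    intro x _
    have hamgm : 2 * (|ω * u x| * |v x|) ≤ v x ^ 2 + (ω * u x) ^ 2 := by
      rw [← sq_abs (v x), ← sq_abs (ω * u x)]
      linarith [two_mul_le_add_sq |ω * u x| |v x|]
    rw [abs_of_nonneg (by positivity : 0 ≤ v x ^ 2 + (ω * u x) ^ 2), div_mul_eq_mul_div,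
      le_div_iff₀ hω]
    calc |-2 * p x * u x * v x| * ω = |p x| * (2 * (|ω * u x| * |v x|)) := by
          simp only [abs_mul, abs_neg, abs_two, abs_of_pos hω]
          ring
      _ ≤ |p x| * (v x ^ 2 + (ω * u x) ^ 2) := by gcongr
  intro x₀ hx₀ hzero
  refine hu fun x hx => ?_
  have hEx : v x ^ 2 + (ω * u x) ^ 2 = 0 :=
    hE.eqOn_zero_of_abs_deriv_le (hp.abs.div_const ω) hle hx₀ hzero
      (by rwa [uIcc_of_le hcd])
  have hωu : ω * u x = 0 := by nlinarith [sq_nonneg (v x), sq_nonneg (ω * u x)]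
  exact (mul_eq_zero.1 hωu).resolve_left hω.ne'

lemma exists_prueferAngle (h : IsSolOn (fun x => ω ^ 2 + p x) u v c d) (hω : 0 < ω)
    (hcd : c ≤ d) (hp : IntervalIntegrable p volume c d) (hu : ¬ EqOn u 0 (Icc c d)) :
    ∃ θ : ℝ → ℝ, IsPrueferAngle ω (fun x => p x / ω) θ c d ∧
      ∀ x ∈ uIcc c d, 0 < v x ^ 2 + (ω * u x) ^ 2 ∧
        v x = √(v x ^ 2 + (ω * u x) ^ 2) * cos (θ x) ∧
        ω * u x = √(v x ^ 2 + (ω * u x) ^ 2) * sin (θ x) := by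
  have hb : IntervalIntegrable (fun x => ω ^ 2 + p x) volume c d := intervalIntegrable_const.add hp
  have hE := h.energy_ne_zero hω hcd hp hu
  obtain ⟨θ, hθ, hpolar⟩ := exists_polar_angle (h.hasACDeriv_snd hcd hb)
    ((h.hasACDeriv_fst hcd hb).const_mul ω) hE
  refine ⟨θ, hθ.congr_deriv fun x hx => ?_, fun x hx => ⟨(hE x hx).symm.lt_of_le (by positivity),
    hpolar x hx⟩⟩
  have hsin : (ω * u x) ^ 2 = (v x ^ 2 + (ω * u x) ^ 2) * sin (θ x) ^ 2 := by
    nth_rw 1 [(hpolar x hx).2, mul_pow, sq_sqrt (by positivity)]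
  simp only [angularVelocity]
  rw [div_eq_iff (hE x hx)]
  field_simp
  linear_combination p x * hsin

end IsSolOn

lemma PeriodicSol.exists_prueferAngle {T : ℝ} (h : PeriodicSol T (fun x => ω ^ 2 + p x) u v)
    (hω : 0 < ω) (hT : 0 ≤ T) (hp : IntervalIntegrable p volume 0 T)
    (hu : ¬ EqOn u 0 (Icc 0 T)) :
    ∃ θ : ℝ → ℝ, IsPrueferAngle ω (fun x => p x / ω) θ 0 T ∧
      ∃ k : ℤ, θ T = θ 0 + 2 * π * k := by
  obtain ⟨hsol, hu₀, hv₀⟩ := h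
  obtain ⟨θ, hθ, hpolar⟩ := hsol.exists_prueferAngle hω hT hp hu
  obtain ⟨hE, hcos, hsin⟩ := hpolar 0 left_mem_uIcc
  obtain ⟨-, hcos', hsin'⟩ := hpolar T right_mem_uIcc
  rw [← hu₀, ← hv₀] at hcos' hsin'
  have hr := (sqrt_pos.2 hE).ne'
  have hangle : (θ T : Real.Angle) = θ 0 :=
    Real.Angle.cos_sin_inj (mul_left_cancel₀ hr (hcos'.symm.trans hcos))
      (mul_left_cancel₀ hr (hsin'.symm.trans hsin))
  obtain ⟨k, hk⟩ := Real.Angle.angle_eq_iff_two_pi_dvd_sub.1 hangle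
  exact ⟨θ, hθ, k, by linear_combination hk⟩

lemma ae_sin_ne_zero_of_injOn {s : Set ℝ} (hθ : InjOn θ s) : ∀ᵐ x, x ∈ s → sin (θ x) ≠ 0 := by
  have hzeros : {t : ℝ | sin t = 0}.Countable :=
    (countable_range fun m : ℤ => m * π).mono fun t ht => sin_eq_zero_iff.1 ht
  have hcount : {x ∈ s | sin (θ x) = 0}.Countable :=
    MapsTo.countable_of_injOn (fun x hx => hx.2) (hθ.mono (sep_subset _ _)) hzeros
  filter_upwards [hcount.ae_notMem volume] with x hx hxs hsin using hx ⟨hxs, hsin⟩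

namespace IsPrueferAngle

lemma strictMonoOn (hθ : IsPrueferAngle ω q θ c d) (hω : 0 < ω) (hcd : c ≤ d)
    (hq : ∀ᵐ x ∂volume.restrict (Icc c d), 0 ≤ q x) : StrictMonoOn θ (Icc c d) :=
  HasACDeriv.strictMonoOn hθ hcd hω (hq.mono fun _ hx => le_add_of_nonneg_right (by positivity))

lemma mul_sub_lt_sub (hθ : IsPrueferAngle ω q θ c d) (hω : 0 < ω) (hcd : c ≤ d)
    (hq : ∀ᵐ x ∂volume.restrict (Icc c d), 0 ≤ q x) (hpos : 0 < ∫ x in c..d, q x) :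
    ω * (d - c) < θ d - θ c := by
  have hdrift : IntervalIntegrable (fun x => q x * sin (θ x) ^ 2) volume c d := by
    simpa using (HasACDeriv.intervalIntegrable hθ).sub (intervalIntegrable_const (c := ω))
  have hsub : θ d - θ c = ω * (d - c) + ∫ x in c..d, q x * sin (θ x) ^ 2 := by
    rw [← HasACDeriv.integral_eq_sub hθ, intervalIntegral.integral_add intervalIntegrable_const
      hdrift, intervalIntegral.integral_const, smul_eq_mul, mul_comm ω]
  rw [ae_restrict_iff' measurableSet_Icc] at hq
  have hnonneg : 0 ≤ᵐ[volume.restrict (Ioc c d)] fun x => q x * sin (θ x) ^ 2 := by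
    refine (ae_restrict_iff' measurableSet_Ioc).2 (hq.mono fun x hx hmem => ?_)
    have := hx (Ioc_subset_Icc_self hmem)
    positivity
  rw [hsub, lt_add_iff_pos_right, intervalIntegral.integral_of_le hcd]
  refine (integral_nonneg_of_ae hnonneg).lt_of_ne' fun hzero => hpos.ne' ?_
  rw [integral_eq_zero_iff_of_nonneg_ae hnonneg hdrift.1, Filter.EventuallyEq,
    ae_restrict_iff' measurableSet_Ioc] at hzero
  rw [intervalIntegral.integral_of_le hcd]
  refine setIntegral_eq_zero_of_ae_eq_zero ?_
  have hinj := (hθ.strictMonoOn hω hcd ((ae_restrict_iff' measurableSet_Icc).2 hq)).injOn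
  filter_upwards [hzero, ae_sin_ne_zero_of_injOn hinj] with x hx hsin hmem
  exact (mul_eq_zero.1 (hx hmem)).resolve_right (pow_ne_zero 2 (hsin (Ioc_subset_Icc_self hmem)))

end IsPrueferAngle

end Pruefer

section Calibration

variable {φ t : ℝ}

/-- The function `1 / sin²`, truncated where it exceeds `1 / sin² φ`: the weight that calibrates
the Lyapunov inequality. -/
noncomputable def truncInvSinSq (φ t : ℝ) : ℝ := (max (sin t ^ 2) (sin φ ^ 2))⁻¹

lemma continuous_truncInvSinSq (hφ : sin φ ≠ 0) : Continuous (truncInvSinSq φ) :=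
  ((continuous_sin.pow 2).max continuous_const).inv₀ fun _ =>
    (lt_max_of_lt_right (by positivity)).ne'

lemma truncInvSinSq_nonneg (φ t : ℝ) : 0 ≤ truncInvSinSq φ t :=
  inv_nonneg.2 (le_max_of_le_left (sq_nonneg _))

lemma truncInvSinSq_le (hφ : sin φ ≠ 0) (t : ℝ) : truncInvSinSq φ t ≤ (sin φ ^ 2)⁻¹ :=
  inv_anti₀ (by positivity) (le_max_right _ _)

lemma truncInvSinSq_mul_sin_sq_le_one (φ t : ℝ) : truncInvSinSq φ t * sin t ^ 2 ≤ 1 :=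
  inv_mul_le_one_of_le₀ (le_max_left _ _) (le_max_of_le_left (sq_nonneg _))

lemma periodic_truncInvSinSq (φ : ℝ) : Function.Periodic (truncInvSinSq φ) π := fun t => by
  simp only [truncInvSinSq, sin_add_pi, neg_sq]

lemma truncInvSinSq_pi_sub (φ t : ℝ) : truncInvSinSq φ (π - t) = truncInvSinSq φ t := by
  simp only [truncInvSinSq, sin_pi_sub]

lemma truncInvSinSq_of_le (ht : 0 ≤ t) (htφ : t ≤ φ) (hφ : φ ≤ π / 2) :
    truncInvSinSq φ t = (sin φ ^ 2)⁻¹ := by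
  have hsin : sin t ≤ sin φ := sin_le_sin_of_le_of_le_pi_div_two (by linarith) hφ htφ
  have hsin_nonneg : 0 ≤ sin t := sin_nonneg_of_nonneg_of_le_pi ht (by linarith)
  rw [truncInvSinSq, max_eq_right (by gcongr)]

lemma truncInvSinSq_of_ge (hφ : 0 ≤ φ) (hφt : φ ≤ t) (ht : t ≤ π / 2) :
    truncInvSinSq φ t = (sin t ^ 2)⁻¹ := by
  have hsin : sin φ ≤ sin t := sin_le_sin_of_le_of_le_pi_div_two (by linarith) ht hφt
  have hsin_nonneg : 0 ≤ sin φ := sin_nonneg_of_nonneg_of_le_pi hφ (by linarith)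
  rw [truncInvSinSq, max_eq_left (by gcongr)]

lemma hasDerivAt_neg_cot (ht : sin t ≠ 0) : HasDerivAt (fun t => -cot t) (sin t ^ 2)⁻¹ t := by
  simp only [cot_eq_cos_div_sin]
  refine ((hasDerivAt_cos t).div (hasDerivAt_sin t) ht).neg.congr_deriv ?_
  rw [← one_div, ← neg_div]
  congr 1
  linear_combination sin_sq_add_cos_sq t

lemma integral_truncInvSinSq_zero_pi_div_two (hφ₀ : 0 < φ) (hφ : φ ≤ π / 2) :
    ∫ t in (0 : ℝ)..π / 2, truncInvSinSq φ t = φ * (sin φ ^ 2)⁻¹ + cot φ := by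
  have hsin : ∀ t ∈ Icc φ (π / 2), 0 < sin t := fun t ht =>
    sin_pos_of_pos_of_lt_pi (hφ₀.trans_le ht.1) (by linarith [ht.2, pi_pos])
  have hcont := continuous_truncInvSinSq (hsin φ ⟨le_rfl, hφ⟩).ne'
  have hleft : ∫ t in (0 : ℝ)..φ, truncInvSinSq φ t = φ * (sin φ ^ 2)⁻¹ := by
    rw [intervalIntegral.integral_congr (g := fun _ => (sin φ ^ 2)⁻¹) fun t ht => ?_,
      intervalIntegral.integral_const, sub_zero, smul_eq_mul]
    rw [uIcc_of_le hφ₀.le] at ht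
    exact truncInvSinSq_of_le ht.1 ht.2 hφ
  have hright : ∫ t in φ..π / 2, truncInvSinSq φ t = cot φ := by
    rw [intervalIntegral.integral_eq_sub_of_hasDerivAt (f := fun t => -cot t) (fun t ht => ?_)
      (hcont.intervalIntegrable _ _), cot_eq_cos_div_sin (π / 2), cos_pi_div_two, zero_div,
      neg_zero, zero_sub, neg_neg]
    rw [uIcc_of_le hφ] at ht
    rw [truncInvSinSq_of_ge hφ₀.le ht.1 ht.2]
    exact hasDerivAt_neg_cot (hsin t ht).ne'
  rw [← intervalIntegral.integral_add_adjacent_intervals (hcont.intervalIntegrable 0 φ)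
    (hcont.intervalIntegrable φ _), hleft, hright]

lemma integral_truncInvSinSq_zero_pi (hφ₀ : 0 < φ) (hφ : φ ≤ π / 2) :
    ∫ t in (0 : ℝ)..π, truncInvSinSq φ t = 2 * (φ * (sin φ ^ 2)⁻¹ + cot φ) := by
  have hcont := continuous_truncInvSinSq
    (sin_pos_of_pos_of_lt_pi hφ₀ (by linarith [pi_pos])).ne'
  have hsymm : ∫ t in π / 2..π, truncInvSinSq φ t = ∫ t in (0 : ℝ)..π / 2, truncInvSinSq φ t := by
    have := intervalIntegral.integral_comp_sub_left (a := 0) (b := π / 2) (truncInvSinSq φ) π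
    simp only [truncInvSinSq_pi_sub, sub_zero, sub_half] at this
    exact this.symm
  rw [← intervalIntegral.integral_add_adjacent_intervals (hcont.intervalIntegrable 0 (π / 2))
    (hcont.intervalIntegrable _ _), hsymm, integral_truncInvSinSq_zero_pi_div_two hφ₀ hφ, two_mul]

lemma integral_truncInvSinSq_comp_lt {θ : ℝ → ℝ} {c d : ℝ} (hcd : c < d) (hφ : sin φ ≠ 0)
    (hφ' : sin φ ^ 2 < 1) (hθ : ContinuousOn θ (Icc c d)) (hturn : θ c + π ≤ θ d) :
    ∫ x in c..d, truncInvSinSq φ (θ x) < (d - c) * (sin φ ^ 2)⁻¹ := by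
  obtain ⟨t, ht, hpeak⟩ := (periodic_truncInvSinSq φ).exists_mem_Ico pi_pos (π / 2) (θ c)
  obtain ⟨x, hx, rfl⟩ := intermediate_value_Icc hcd.le hθ ⟨ht.1, ht.2.le.trans hturn⟩
  have hlt : truncInvSinSq φ (θ x) < (sin φ ^ 2)⁻¹ := by
    rw [← hpeak, truncInvSinSq, sin_pi_div_two, one_pow, max_eq_left hφ'.le]
    gcongr
  calc ∫ x in c..d, truncInvSinSq φ (θ x) < ∫ _ in c..d, (sin φ ^ 2)⁻¹ :=
        intervalIntegral.integral_lt_integral_of_continuousOn_of_le_of_exists_lt hcd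
          ((continuous_truncInvSinSq hφ).comp_continuousOn hθ) continuousOn_const
          (fun x _ => truncInvSinSq_le hφ (θ x)) ⟨x, hx, hlt⟩
    _ = (d - c) * (sin φ ^ 2)⁻¹ := by rw [intervalIntegral.integral_const, smul_eq_mul]

end Calibration

lemma HasACDeriv.mul_integral_le_integral_comp_mul_deriv {F f f' : ℝ → ℝ} {P c d : ℝ}
    (hF : Continuous F) (hF₀ : ∀ t, 0 ≤ F t) (hper : Function.Periodic F P) (hP : 0 ≤ P)
    (hf : HasACDeriv f f' c d) {m : ℕ} (hm : f c + m * P ≤ f d) :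
    m * ∫ t in (0 : ℝ)..P, F t ≤ ∫ x in c..d, F (f x) * f' x := by
  have hturns := hper.intervalIntegral_add_zsmul_eq m (f c) hF.intervalIntegrable
  rw [hper.intervalIntegral_add_eq (f c) 0, zero_add] at hturns
  simp only [zsmul_eq_mul, Int.cast_natCast] at hturns
  rw [integral_comp_mul_deriv hF hf, ← hturns]
  exact intervalIntegral.integral_mono_interval le_rfl (by nlinarith [m.cast_nonneg (α := ℝ)]) hm
    (Filter.Eventually.of_forall hF₀) (hF.intervalIntegrable _ _)

namespace IsPrueferAngle

variable {ω c d : ℝ} {q θ : ℝ → ℝ} {m : ℕ}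

lemma mul_integral_sub_le_integral (hθ : IsPrueferAngle ω q θ c d) (hcd : c ≤ d)
    (hqi : IntervalIntegrable q volume c d) (hq : ∀ᵐ x ∂volume.restrict (Icc c d), 0 ≤ q x)
    {g : ℝ → ℝ} (hg : Continuous g) (hg₀ : ∀ t, 0 ≤ g t) (hper : Function.Periodic g π)
    (hg₁ : ∀ t, g t * sin t ^ 2 ≤ 1) (hturn : θ c + m * π ≤ θ d) :
    m * (∫ t in (0 : ℝ)..π, g t) - ω * ∫ x in c..d, g (θ x) ≤ ∫ x in c..d, q x := by
  have hgθ : ContinuousOn (fun x => g (θ x)) (uIcc c d) :=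
    hg.comp_continuousOn (HasACDeriv.continuousOn hθ)
  have hleft : IntervalIntegrable (fun x => ω * g (θ x)) volume c d :=
    hgθ.intervalIntegrable.const_mul ω
  have hright : IntervalIntegrable
      (fun x => g (θ x) * (ω + q x * sin (θ x) ^ 2)) volume c d :=
    (HasACDeriv.intervalIntegrable hθ).continuousOn_mul hgθ
  calc m * (∫ t in (0 : ℝ)..π, g t) - ω * ∫ x in c..d, g (θ x)
      ≤ (∫ x in c..d, g (θ x) * (ω + q x * sin (θ x) ^ 2)) - ω * ∫ x in c..d, g (θ x) :=
        sub_le_sub_right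
          (HasACDeriv.mul_integral_le_integral_comp_mul_deriv hg hg₀ hper pi_pos.le hθ hturn) _
    _ = ∫ x in c..d, q x * (g (θ x) * sin (θ x) ^ 2) := by
        rw [← intervalIntegral.integral_const_mul, ← intervalIntegral.integral_sub hright hleft]
        congr with x
        ring
    _ ≤ ∫ x in c..d, q x := by
        refine intervalIntegral.integral_mono_ae_restrict hcd
          ((hright.sub hleft).congr fun x _ => ?_) hqi ?_
        · ring
        · filter_upwards [hq] with x hx using mul_le_of_le_one_right hx (hg₁ (θ x))

lemma two_mul_cot_lt_integral (hθ : IsPrueferAngle ω q θ c d) (hω : 0 < ω) (hcd : c < d)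
    (hqi : IntervalIntegrable q volume c d) (hq : ∀ᵐ x ∂volume.restrict (Icc c d), 0 ≤ q x)
    (hm : ω * (d - c) < m * π) (hturn : θ c + m * π ≤ θ d) :
    2 * m * cot (ω * (d - c) / (2 * m)) < ∫ x in c..d, q x := by
  set φ := ω * (d - c) / (2 * m) with hφ_def
  have hlen : 0 < ω * (d - c) := mul_pos hω (sub_pos.2 hcd)
  have hm₀ : (0 : ℝ) < m := pos_of_mul_pos_left (hlen.trans hm) pi_pos.le
  have hm₁ : (1 : ℝ) ≤ m := by exact_mod_cast hm₀
  have hφ₀ : 0 < φ := by positivity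
  have hφ : φ < π / 2 := by
    rw [hφ_def, div_lt_div_iff₀ (by positivity) two_pos]
    linarith
  have hsin : 0 < sin φ := sin_pos_of_pos_of_lt_pi hφ₀ (by linarith)
  have hsin' : sin φ ^ 2 < 1 := by
    have := cos_pos_of_mem_Ioo ⟨by linarith, hφ⟩
    nlinarith [sin_sq_add_cos_sq φ]
  have hθc : ContinuousOn θ (Icc c d) := uIcc_of_le hcd.le ▸ HasACDeriv.continuousOn hθ
  have hweight := integral_truncInvSinSq_comp_lt hcd hsin.ne' hsin' hθc (by nlinarith [pi_pos])
  -- `φ` is chosen so that the multiples of `1 / sin² φ` cancel.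
  calc 2 * m * cot φ
      = m * (2 * (φ * (sin φ ^ 2)⁻¹ + cot φ)) - ω * ((d - c) * (sin φ ^ 2)⁻¹) := by
        have hmφ : 2 * m * φ = ω * (d - c) := by rw [hφ_def]; field_simp
        linear_combination -(sin φ ^ 2)⁻¹ * hmφ
    _ < m * (2 * (φ * (sin φ ^ 2)⁻¹ + cot φ)) - ω * ∫ x in c..d, truncInvSinSq φ (θ x) := by
        gcongr
    _ ≤ ∫ x in c..d, q x := by
        rw [← integral_truncInvSinSq_zero_pi hφ₀ hφ.le]
        exact hθ.mul_integral_sub_le_integral hcd.le hqi hq (continuous_truncInvSinSq hsin.ne')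
          (truncInvSinSq_nonneg φ) (periodic_truncInvSinSq φ)
          (truncInvSinSq_mul_sin_sq_le_one φ) hturn

end IsPrueferAngle

section Periodic

variable {T ω : ℝ} {n : ℕ}

lemma PeriodicSol.cot_lt_integral {p u v : ℝ → ℝ}
    (h : PeriodicSol T (fun x => ω ^ 2 + p x) u v) (hT : 0 < T) (hω : 0 < ω)
    (hn : 2 * π * n ≤ ω * T) (hn' : ω * T < 2 * π * (n + 1))
    (hpi : IntervalIntegrable p volume 0 T) (hp : ∀ᵐ x ∂volume.restrict (Icc 0 T), 0 ≤ p x)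
    (hpos : 0 < ∫ x in (0 : ℝ)..T, p x) (hu : ¬ EqOn u 0 (Icc 0 T)) :
    4 * (n + 1) * ω * cot (ω * T / (4 * (n + 1))) < ∫ x in (0 : ℝ)..T, p x := by
  obtain ⟨θ, hθ, k, hk⟩ := h.exists_prueferAngle hω hT.le hpi hu
  have hq : ∀ᵐ x ∂volume.restrict (Icc 0 T), 0 ≤ p x / ω :=
    hp.mono fun x hx => div_nonneg hx hω.le
  have hint : ∫ x in (0 : ℝ)..T, p x / ω = (∫ x in (0 : ℝ)..T, p x) / ω :=
    intervalIntegral.integral_div _ _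
  have hadvance : ω * (T - 0) < θ T - θ 0 :=
    hθ.mul_sub_lt_sub hω hT.le hq (hint ▸ div_pos hpos hω)
  have hnk : (n : ℝ) < k := by
    refine lt_of_mul_lt_mul_left ?_ two_pi_pos.le
    linarith
  have hnk' : (n : ℝ) + 1 ≤ k := by exact_mod_cast hnk
  have hlyapunov := hθ.two_mul_cot_lt_integral (m := 2 * (n + 1)) hω hT (hpi.div_const ω) hq
    (by push_cast; linarith) (by push_cast; nlinarith [pi_pos])
  have hturns : 2 * ((2 * (n + 1) : ℕ) : ℝ) = 4 * (n + 1) := by push_cast; ring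
  rwa [hturns, sub_zero, hint, lt_div_iff₀ hω, mul_right_comm] at hlyapunov

lemma Prec.integral_lt {a b : ℝ → ℝ} (h : Prec T a b) (hT : 0 ≤ T)
    (ha : IntervalIntegrable a volume 0 T) (hb : IntervalIntegrable b volume 0 T) :
    ∫ x in (0 : ℝ)..T, a x < ∫ x in (0 : ℝ)..T, b x := by
  obtain ⟨hle, hlt⟩ := h
  rw [← restrict_Ioc_eq_restrict_Icc] at hle
  refine intervalIntegral.integral_lt_integral_of_ae_le_of_measure_setOfPred_lt_ne_zero hT ha hb
    hle ?_
  rw [restrict_Ioc_eq_restrict_Icc, Measure.restrict_apply' measurableSet_Icc, inter_comm]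
  exact hlt.ne'

theorem stmt7_general (hT : 0 < T) (hω : 0 < ω) (hn : 2 * π * n ≤ ω * T)
    (hn' : ω * T < 2 * π * (n + 1)) {a : ℝ → ℝ} (ha : IntegrableOn a (Icc 0 T))
    (hprec : Prec T (fun _ => ω ^ 2) a)
    (hnorm : ∫ x in (0 : ℝ)..T, |a x - ω ^ 2| ≤ 4 * (n + 1) * ω * cot (ω * T / (4 * (n + 1)))) :
    ∀ ε ∈ Ioc (0 : ℝ) 1, ∀ u v : ℝ → ℝ,
      PeriodicSol T (fun x => ω ^ 2 + ε * (a x - ω ^ 2)) u v → ∀ x ∈ Icc 0 T, u x = 0 := by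
  intro ε ⟨hε, hε₁⟩ u v hsol
  have hai : IntervalIntegrable a volume 0 T := by
    rwa [intervalIntegrable_iff_integrableOn_Icc_of_le hT.le]
  have hsub : IntervalIntegrable (fun x => a x - ω ^ 2) volume 0 T :=
    hai.sub intervalIntegrable_const
  have hpos : 0 < ∫ x in (0 : ℝ)..T, (a x - ω ^ 2) := by
    rw [intervalIntegral.integral_sub hai intervalIntegrable_const]
    exact sub_pos.2 (hprec.integral_lt hT.le intervalIntegrable_const hai)
  by_contra hu
  have hlyapunov := hsol.cot_lt_integral hT hω hn hn' (hsub.const_mul ε)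
    (hprec.1.mono fun x hx => mul_nonneg hε.le (sub_nonneg.2 hx))
    (by rw [intervalIntegral.integral_const_mul]; positivity) hu
  refine hlyapunov.not_ge ?_
  calc ∫ x in (0 : ℝ)..T, ε * (a x - ω ^ 2) = ε * ∫ x in (0 : ℝ)..T, (a x - ω ^ 2) :=
        intervalIntegral.integral_const_mul _ _
    _ ≤ ∫ x in (0 : ℝ)..T, (a x - ω ^ 2) := mul_le_of_le_one_left hpos.le hε₁
    _ ≤ ∫ x in (0 : ℝ)..T, |a x - ω ^ 2| :=
        intervalIntegral.integral_mono_on hT.le hsub hsub.abs fun x _ => le_abs_self _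
    _ ≤ _ := hnorm

lemma lam_eq_sq (T : ℝ) (n : ℕ) : lam T n = (2 * π * n / T) ^ 2 := by
  rw [lam]
  ring

lemma beta1_eq (hT : T ≠ 0) (n : ℕ) :
    beta1 T n = 4 * (n + 1) * (2 * π * n / T) * cot (2 * π * n / T * T / (4 * (n + 1))) := by
  rw [beta1, div_mul_cancel₀ _ hT]
  congr 1
  · ring
  · congr 1
    field_simp
    ring

end Periodic

theorem stmt7 (T : ℝ) (hT : 0 < T) (n : ℕ) (hn : 1 ≤ n)
    (a : ℝ → ℝ) (hLT : MemLT T a)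
    (hprec : Prec T (fun _ => lam T n) a)
    (hnorm : (∫ x in (0:ℝ)..T, |a x - lam T n|) ≤ beta1 T n) :
    ∀ ε : ℝ, ε ∈ Set.Ioc (0:ℝ) 1 →
      ∀ u v : ℝ → ℝ, PeriodicSol T (fun x => lam T n + ε * (a x - lam T n)) u v →
        ∀ x ∈ Set.Icc 0 T, u x = 0 := by
  have hωT : 2 * π * n / T * T = 2 * π * n := div_mul_cancel₀ _ hT.ne'
  rw [beta1_eq hT.ne'] at hnorm
  simp only [lam_eq_sq] at hprec hnorm ⊢
  exact stmt7_general hT (by positivity) hωT.ge (by rw [hωT]; linarith [pi_pos]) hLT.2.2 hprec hnorm
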